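/- (Second derivative of a star-exponential.) For every configuration functional Φ ∈ A₀ over a type E and all x₁, x₂ ∈ E one has D_{x₁,x₂}(exp∗ Φ) = (exp∗ Φ) ∗ ( D_{x₁} Φ ∗ D_{x₂} Φ + D_{x₁,x₂} Φ ). -/

import Mathlib

open MeasureTheory Finset

abbrev CF (E : Type) : Type := (n : ℕ) → (Fin n → E) → ℝ

namespace CF

variable {E : Type}

/-- Symmetry of a configuration functional under permutations of the arguments. -/
def IsSymm (F : CF E) : Prop :=
  ∀ (n : ℕ) (σ : Equiv.Perm (Fin n)) (x : Fin n → E), F n (x ∘ σ) = F n x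

/-- The subtuple of `x` with indices in `I`, listed in increasing order. -/
noncomputable def sub {n : ℕ} (x : Fin n → E) (I : Finset (Fin n)) : Fin I.card → E :=
  fun i => x (I.orderIsoOfFin rfl i).1

/-- The convolution `Ψ ∗ Φ`. -/
noncomputable def conv (Ψ Φ : CF E) : CF E :=
  fun n x => ∑ I : Finset (Fin n), Ψ I.card (sub x I) * Φ Iᶜ.card (sub x Iᶜ)

/-- The unit `𝟙`. -/
def unit : CF E := fun n _ => if n = 0 then 1 else 0

/-- Star-powers `Φ^{∗m}`. -/
noncomputable def starPow (Φ : CF E) : ℕ → CF E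
  | 0 => unit
  | m + 1 => conv Φ (starPow Φ m)

/-- The star-exponential `exp∗ Φ = 𝟙 + Σ_{m≥1} Φ^{∗m}/m!`; on `A₀` the sum in the
`n`-th component is finite since `(Φ^{∗m})^{(n)} = 0` for `m > n`. -/
noncomputable def starExp (Φ : CF E) : CF E :=
  fun n x => ∑ m ∈ Finset.range (n + 1), ((m.factorial : ℝ))⁻¹ * starPow Φ m n x

/-- The derivative `D_x`. -/
noncomputable def D (x : E) (Φ : CF E) : CF E := fun n y => Φ (n + 1) (Fin.cons x y)

/-- The second derivative `D_{x₁,x₂} = D_{x₁} ∘ D_{x₂}`. -/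
noncomputable def D2 (x₁ x₂ : E) (Φ : CF E) : CF E := D x₁ (D x₂ Φ)

end CF

/-!
The derivative `D x` is a derivation for `∗`: a subset of `{0, …, n}` either contains the index `0`
carrying `x` or it does not. Since `∗` is commutative and associative, this gives
`D x (Φ^{∗(m+1)}) = (m+1) • D x Φ ∗ Φ^{∗m}` and hence `D x (exp∗ Φ) = exp∗ Φ ∗ D x Φ`;
differentiating once more gives the second derivative.
-/

namespace CF

section FinsetFinSucc

variable {n : ℕ}

theorem compl_map_succEmb (J : Finset (Fin n)) :
    (J.map (Fin.succEmb n))ᶜ = insert 0 (Jᶜ.map (Fin.succEmb n)) := by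
  ext i
  cases i using Fin.cases <;> simp

theorem compl_insert_zero_map_succEmb (J : Finset (Fin n)) :
    (insert 0 (J.map (Fin.succEmb n)))ᶜ = Jᶜ.map (Fin.succEmb n) := by
  rw [compl_eq_comm, compl_map_succEmb, compl_compl]

theorem powerset_map {α β : Type*} (f : α ↪ β) (s : Finset α) :
    (s.map f).powerset = s.powerset.map (mapEmbedding f).toEmbedding := by
  ext t
  simp only [mem_powerset, subset_map_iff, mem_map, RelEmbedding.coe_toEmbedding,
    mapEmbedding_apply, eq_comm]

theorem sum_finset_fin_succ {M : Type*} [AddCommMonoid M] (f : Finset (Fin (n + 1)) → M) :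
    ∑ I, f I = ∑ J : Finset (Fin n), f (J.map (Fin.succEmb n)) +
      ∑ J : Finset (Fin n), f (insert 0 (J.map (Fin.succEmb n))) := by
  have univ_eq : (univ : Finset (Fin (n + 1))) = insert 0 (univ.map (Fin.succEmb n)) := by
    rw [← compl_empty, ← map_empty (Fin.succEmb n), compl_map_succEmb, compl_empty]
  rw [← powerset_univ, univ_eq, sum_powerset_insert (by simp), powerset_map, powerset_univ]
  simp only [sum_map, RelEmbedding.coe_toEmbedding, mapEmbedding_apply]

theorem orderEmbOfFin_map_succEmb (J : Finset (Fin n)) {k : ℕ} (hJ : J.card = k)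
    (hmap : (J.map (Fin.succEmb n)).card = k) :
    ⇑((J.map (Fin.succEmb n)).orderEmbOfFin hmap) = Fin.succ ∘ J.orderEmbOfFin hJ :=
  (orderEmbOfFin_unique hmap (fun i => by simp)
    (Fin.strictMono_succ.comp (J.orderEmbOfFin hJ).strictMono)).symm

theorem orderEmbOfFin_insert_zero_map_succEmb (J : Finset (Fin n)) {k : ℕ} (hJ : J.card = k)
    (hins : (insert 0 (J.map (Fin.succEmb n))).card = k + 1) :
    ⇑((insert 0 (J.map (Fin.succEmb n))).orderEmbOfFin hins) =
      Fin.cons 0 (Fin.succ ∘ J.orderEmbOfFin hJ) := by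
  refine (orderEmbOfFin_unique hins (fun i => ?_) ?_).symm
  · cases i using Fin.cases <;> simp
  · intro i j
    cases i using Fin.cases <;> cases j using Fin.cases <;> simp

end FinsetFinSucc

variable {E : Type}

section Subtuple

variable {n : ℕ}

theorem apply_sub (F : CF E) (x : Fin n → E) (I : Finset (Fin n)) {k : ℕ} (hI : I.card = k) :
    F I.card (sub x I) = F k (x ∘ I.orderEmbOfFin hI) := by
  subst hI
  rfl

theorem apply_sub_cons_map_succEmb (F : CF E) (x : E) (y : Fin n → E) (J : Finset (Fin n)) :
    F _ (sub (Fin.cons x y : Fin (n + 1) → E) (J.map (Fin.succEmb n))) = F _ (sub y J) := by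
  rw [apply_sub F _ _ (card_map _), orderEmbOfFin_map_succEmb J rfl]
  rfl

theorem apply_sub_cons_insert_zero_map_succEmb (F : CF E) (x : E) (y : Fin n → E)
    (J : Finset (Fin n)) :
    F _ (sub (Fin.cons x y : Fin (n + 1) → E) (insert 0 (J.map (Fin.succEmb n)))) =
      D x F _ (sub y J) := by
  have card_eq : (insert 0 (J.map (Fin.succEmb n))).card = J.card + 1 := by
    rw [card_insert_of_notMem (by simp), card_map]
  rw [apply_sub F _ _ card_eq, orderEmbOfFin_insert_zero_map_succEmb J rfl, D]
  congr 1
  ext i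
  cases i using Fin.cases <;> rfl

end Subtuple

theorem apply_succ_eq_D (F : CF E) (n : ℕ) (z : Fin (n + 1) → E) :
    F (n + 1) z = D (z 0) F n (Fin.tail z) := by
  rw [D, Fin.cons_self_tail]

theorem D_unit (x : E) : D x (unit : CF E) = 0 := by
  ext n y
  simp [D, unit]

theorem D_smul (x : E) (c : ℝ) (Φ : CF E) : D x (c • Φ) = c • D x Φ :=
  rfl

theorem D_sum {ι : Type*} (x : E) (s : Finset ι) (Φ : ι → CF E) :
    D x (∑ i ∈ s, Φ i) = ∑ i ∈ s, D x (Φ i) := by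
  ext n y
  simp only [D, Finset.sum_apply]

theorem D_conv (x : E) (Ψ Φ : CF E) :
    D x (conv Ψ Φ) = conv (D x Ψ) Φ + conv Ψ (D x Φ) := by
  ext n y
  rw [add_comm, D, conv, sum_finset_fin_succ, Pi.add_apply, Pi.add_apply]
  congr 1 <;> refine sum_congr rfl fun J _ => ?_
  · rw [compl_map_succEmb, apply_sub_cons_map_succEmb Ψ,
      apply_sub_cons_insert_zero_map_succEmb Φ]
  · rw [compl_insert_zero_map_succEmb, apply_sub_cons_insert_zero_map_succEmb Ψ,
      apply_sub_cons_map_succEmb Φ]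

theorem conv_add (Ψ Φ Χ : CF E) : conv Ψ (Φ + Χ) = conv Ψ Φ + conv Ψ Χ := by
  ext n y
  simp only [conv, Pi.add_apply, mul_add, sum_add_distrib]

theorem add_conv (Ψ Φ Χ : CF E) : conv (Ψ + Φ) Χ = conv Ψ Χ + conv Φ Χ := by
  ext n y
  simp only [conv, Pi.add_apply, add_mul, sum_add_distrib]

theorem conv_smul (c : ℝ) (Ψ Φ : CF E) : conv Ψ (c • Φ) = c • conv Ψ Φ := by
  ext n y
  simp only [conv, Pi.smul_apply, smul_eq_mul, mul_sum, mul_left_comm]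

theorem conv_zero (Ψ : CF E) : conv Ψ 0 = 0 := by
  ext n y
  simp only [conv, Pi.zero_apply, mul_zero, sum_const_zero]

theorem conv_sum {ι : Type*} (Ψ : CF E) (s : Finset ι) (Φ : ι → CF E) :
    conv Ψ (∑ i ∈ s, Φ i) = ∑ i ∈ s, conv Ψ (Φ i) := by
  ext n y
  simp only [conv, Finset.sum_apply, mul_sum]
  exact sum_comm

theorem conv_comm (Ψ Φ : CF E) : conv Ψ Φ = conv Φ Ψ := by
  ext n y
  refine Fintype.sum_bijective compl compl_bijective _ _ fun I => ?_
  rw [compl_compl, mul_comm]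

theorem conv_apply_zero (Ψ Φ : CF E) (y : Fin 0 → E) : conv Ψ Φ 0 y = Ψ 0 y * Φ 0 y := by
  have apply_sub_zero (F : CF E) (I : Finset (Fin 0)) : F I.card (sub y I) = F 0 y := by
    rw [apply_sub F y I (card_eq_zero.mpr I.eq_empty_of_isEmpty),
      Subsingleton.elim (y ∘ _) y]
  simp only [conv, apply_sub_zero, univ_unique, sum_singleton]

/- Reindexing pairs of nested subsets is avoided: both sides have the same value on the empty
configuration, and by the Leibniz rule their derivatives agree by induction on the number of
points. -/
theorem conv_assoc (Ψ Φ Χ : CF E) : conv (conv Ψ Φ) Χ = conv Ψ (conv Φ Χ) := by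
  ext n y
  induction n generalizing Ψ Φ Χ with
  | zero => simp only [conv_apply_zero, mul_assoc]
  | succ n ih =>
    rw [apply_succ_eq_D (conv (conv Ψ Φ) Χ), apply_succ_eq_D (conv Ψ (conv Φ Χ))]
    simp only [D_conv, add_conv, conv_add, Pi.add_apply, ih, add_assoc]

theorem conv_left_comm (Ψ Φ Χ : CF E) : conv Ψ (conv Φ Χ) = conv Φ (conv Ψ Χ) := by
  rw [← conv_assoc, conv_comm Ψ Φ, conv_assoc]

theorem conv_apply_congr_right {Ψ Φ Φ' : CF E} {n : ℕ} (h : ∀ k ≤ n, Φ k = Φ' k) :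
    conv Ψ Φ n = conv Ψ Φ' n := by
  ext y
  refine sum_congr rfl fun I _ => ?_
  rw [h _ (card_finset_fin_le Iᶜ)]

theorem D_starPow_succ (x : E) (Φ : CF E) (m : ℕ) :
    D x (starPow Φ (m + 1)) = ((m + 1 : ℕ) : ℝ) • conv (D x Φ) (starPow Φ m) := by
  induction m with
  | zero =>
    simp only [starPow, D_conv, D_unit, conv_zero, add_zero, zero_add, Nat.cast_one, one_smul]
  | succ m ih =>
    calc D x (starPow Φ (m + 2))
        = conv (D x Φ) (starPow Φ (m + 1)) + conv Φ (D x (starPow Φ (m + 1))) := D_conv x Φ _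
      _ = conv (D x Φ) (starPow Φ (m + 1)) +
            ((m + 1 : ℕ) : ℝ) • conv (D x Φ) (starPow Φ (m + 1)) := by
          rw [ih, conv_smul, conv_left_comm, ← starPow]
      _ = ((m + 2 : ℕ) : ℝ) • conv (D x Φ) (starPow Φ (m + 1)) := by
          push_cast
          module

theorem starPow_apply_eq_zero {Φ : CF E} (hΦ0 : Φ 0 = 0) {m n : ℕ} (hnm : n < m) :
    starPow Φ m n = 0 := by
  induction m generalizing n with
  | zero => exact absurd hnm n.not_lt_zero
  | succ m ih =>
    ext y
    cases n with
    | zero => rw [starPow, conv_apply_zero, hΦ0, Pi.zero_apply, zero_mul]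
    | succ n =>
      have conv_eq_zero : conv (D (y 0) Φ) (starPow Φ m) n = 0 := by
        rw [conv_apply_congr_right (Φ' := 0) fun k hk => ih (by omega), conv_zero, Pi.zero_apply]
      rw [apply_succ_eq_D (starPow Φ (m + 1)), D_starPow_succ, Pi.smul_apply, conv_eq_zero,
        smul_zero, Pi.zero_apply, Pi.zero_apply]

/-- The partial sum `Σ_{m<N} Φ^{∗m}/m!` of the star-exponential series. Unlike `starExp`, its
truncation order does not depend on the number of points, so it is a linear combination of
star-powers in the space of functionals. -/
noncomputable def starExpPartialSum (Φ : CF E) (N : ℕ) : CF E :=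
  ∑ m ∈ range N, (m.factorial : ℝ)⁻¹ • starPow Φ m

theorem starExp_apply (Φ : CF E) (n : ℕ) : starExp Φ n = starExpPartialSum Φ (n + 1) n := by
  ext y
  simp only [starExp, starExpPartialSum, Finset.sum_apply, Pi.smul_apply, smul_eq_mul]

theorem starExp_apply_of_lt {Φ : CF E} (hΦ0 : Φ 0 = 0) {n N : ℕ} (hnN : n < N) :
    starExp Φ n = starExpPartialSum Φ N n := by
  rw [starExp_apply, starExpPartialSum, starExpPartialSum, Finset.sum_apply, Finset.sum_apply]
  refine sum_subset (range_subset_range.mpr hnN) fun m _ hm => ?_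
  have hnm : n < m := by simpa using hm
  rw [Pi.smul_apply, starPow_apply_eq_zero hΦ0 hnm, smul_zero]

theorem D_starExpPartialSum_succ (x : E) (Φ : CF E) (N : ℕ) :
    D x (starExpPartialSum Φ (N + 1)) = conv (D x Φ) (starExpPartialSum Φ N) := by
  have coeff (m : ℕ) : ((m + 1).factorial : ℝ)⁻¹ * ((m + 1 : ℕ) : ℝ) = (m.factorial : ℝ)⁻¹ := by
    rw [Nat.factorial_succ, Nat.cast_mul, mul_inv_rev, inv_mul_cancel_right₀ (by positivity)]
  simp_rw [starExpPartialSum, D_sum, D_smul, conv_sum, conv_smul]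
  rw [sum_range_succ', starPow, D_unit, smul_zero, add_zero]
  simp_rw [D_starPow_succ, smul_smul, coeff]

theorem D_starExp (x : E) {Φ : CF E} (hΦ0 : Φ 0 = 0) :
    D x (starExp Φ) = conv (starExp Φ) (D x Φ) := by
  ext n y
  calc D x (starExp Φ) n y
      = D x (starExpPartialSum Φ (n + 2)) n y := by rw [D, starExp_apply, D]
    _ = conv (D x Φ) (starExpPartialSum Φ (n + 1)) n y := by rw [D_starExpPartialSum_succ]
    _ = conv (D x Φ) (starExp Φ) n y := by
        rw [conv_apply_congr_right fun k hk => starExp_apply_of_lt hΦ0 (Nat.lt_succ_of_le hk)]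
    _ = conv (starExp Φ) (D x Φ) n y := by rw [conv_comm]

end CF

open CF in
theorem D2_starExp_general (E : Type) (x₁ x₂ : E) (Φ : CF E) (hΦ0 : Φ 0 = 0) :
    D2 x₁ x₂ (starExp Φ) =
      conv (starExp Φ) (conv (D x₁ Φ) (D x₂ Φ) + D2 x₁ x₂ Φ) :=
  calc D x₁ (D x₂ (starExp Φ))
      = D x₁ (conv (starExp Φ) (D x₂ Φ)) := by rw [D_starExp x₂ hΦ0]
    _ = conv (conv (starExp Φ) (D x₁ Φ)) (D x₂ Φ) + conv (starExp Φ) (D x₁ (D x₂ Φ)) := by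
        rw [D_conv, D_starExp x₁ hΦ0]
    _ = conv (starExp Φ) (conv (D x₁ Φ) (D x₂ Φ) + D x₁ (D x₂ Φ)) := by
        rw [conv_assoc, conv_add]

open CF in
/-- second derivative of a star-exponential,
`D_{x₁,x₂}(exp∗ Φ) = (exp∗ Φ) ∗ (D_{x₁}Φ ∗ D_{x₂}Φ + D_{x₁,x₂}Φ)`. -/
theorem D2_starExp (E : Type) (x₁ x₂ : E) (Φ : CF E) (hΦ0 : Φ 0 = 0) (hΦsymm : IsSymm Φ) :
    D2 x₁ x₂ (starExp Φ) =
      conv (starExp Φ) (conv (D x₁ Φ) (D x₂ Φ) + D2 x₁ x₂ Φ) :=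
  D2_starExp_general E x₁ x₂ Φ hΦ0
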